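/- (Chebyshev step in the proof of Lemma 1.) Let (Ω, P) be a probability space, let ℓ and N be positive integers, and let g : Fin N → ℝ with 0 < g_j ≤ 1 for all j. Let (Φ_{ij})_{i∈Fin ℓ, j∈Fin N} be mutually independent real random variables with E[Φ_{ij}] = 0, E[Φ_{ij}²] = 1, and E[Φ_{ij}⁴] = 1/g_j for all i, j (each Φ_{ij} lying in L⁴). Let u, v ∈ ℝ^N with u ≠ 0 and v ≠ 0, and suppose ‖u‖_∞ ≤ μ·‖u‖₂ for some μ ≥ 0. Let x = (1/√ℓ)·Φu and y = (1/√ℓ)·Φv, where Φ is the ℓ × N random matrix with entries Φ_{ij}. Then for every ε > 0, P( |⟨x, y⟩ − ⟨u, v⟩| ≥ ε·‖u‖₂·‖v‖₂ ) ≤ (2 + μ²·max_j (1/g_j)) / (ε²·ℓ). -/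

import Mathlib

open MeasureTheory ProbabilityTheory Finset

/-!
The fourth cumulant is additive over independent summands and homogeneous of degree `4`, so the
fourth cumulant of `∑ⱼ wⱼ Xⱼ` is `∑ⱼ wⱼ⁴ κ₄(Xⱼ)`. Polarizing this identity in `w` gives, for
centered `A = ∑ⱼ uⱼ Xⱼ` and `B = ∑ⱼ vⱼ Xⱼ`, the exact variance
`Var[AB] = Var[A] Var[B] + Cov[A, B]² + ∑ⱼ uⱼ² vⱼ² κ₄(Xⱼ)`. For unit variances the first two
terms are at most `2‖u‖²‖v‖²`, and if `E[Xⱼ⁴] ≤ K` the peak-to-total condition bounds the last one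
by `μ² K ‖u‖²‖v‖²`. Since `⟨x, y⟩` is an average of `ℓ` independent such products, Chebyshev's
inequality concludes.
-/

section Moments

variable {Ω : Type*} [MeasurableSpace Ω] {P : Measure Ω} {X Y : Ω → ℝ}

lemma integrable_pow_of_memLp [IsFiniteMeasure P] {p : ENNReal} (hX : MemLp X p P) {n : ℕ}
    (hn : n ≤ p) : Integrable (fun ω => X ω ^ n) P :=
  (integrable_norm_iff (hX.1.fun_pow n)).1 <| by
    simpa only [norm_pow] using (hX.mono_exponent hn).integrable_norm_pow'

lemma memLp_two_mul_of_memLp_four (hX : MemLp X 4 P) (hY : MemLp Y 4 P) : MemLp (X * Y) 2 P := by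
  have : ENNReal.HolderTriple 4 4 2 := ⟨by
    rw [show (4 : ENNReal) = 2 * 2 by norm_num, ENNReal.mul_inv (by simp) (by simp), ← mul_add,
      ENNReal.inv_two_add_inv_two, mul_one]⟩
  exact hY.mul hX

lemma integral_add_pow_four_of_indepFun [IsProbabilityMeasure P] (hXY : IndepFun X Y P)
    (hX : MemLp X 4 P) (hY : MemLp Y 4 P) (hX0 : ∫ ω, X ω ∂P = 0) (hY0 : ∫ ω, Y ω ∂P = 0) :
    ∫ ω, (X ω + Y ω) ^ 4 ∂P =
      ∫ ω, X ω ^ 4 ∂P + 6 * ((∫ ω, X ω ^ 2 ∂P) * ∫ ω, Y ω ^ 2 ∂P) + ∫ ω, Y ω ^ 4 ∂P := by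
  have hprod (m n : ℕ) : ∫ ω, X ω ^ m * Y ω ^ n ∂P = (∫ ω, X ω ^ m ∂P) * ∫ ω, Y ω ^ n ∂P :=
    hXY.integral_fun_comp_mul_comp (f := (· ^ m)) (g := (· ^ n)) hX.aemeasurable hY.aemeasurable
      (by fun_prop) (by fun_prop)
  have hint {m n : ℕ} (hm : m ≤ 4) (hn : n ≤ 4) : Integrable (fun ω => X ω ^ m * Y ω ^ n) P :=
    (hXY.comp (measurable_id.pow_const m) (measurable_id.pow_const n)).integrable_mul
      (integrable_pow_of_memLp hX (mod_cast hm)) (integrable_pow_of_memLp hY (mod_cast hn))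
  calc ∫ ω, (X ω + Y ω) ^ 4 ∂P
      = ∫ ω, ∑ m ∈ range 5, (Nat.choose 4 m : ℝ) * (X ω ^ m * Y ω ^ (4 - m)) ∂P := by
        simp only [add_pow, mul_comm]
    _ = ∑ m ∈ range 5, (Nat.choose 4 m : ℝ) * ((∫ ω, X ω ^ m ∂P) * ∫ ω, Y ω ^ (4 - m) ∂P) := by
        rw [integral_finsetSum _ fun m hm => (hint (by grind) (by grind)).const_mul _]
        simp only [integral_const_mul, hprod]
    _ = _ := by
        simp [sum_range_succ, Nat.choose, hX0, hY0]
        ring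

lemma integral_sq_mul_sq_polarization (hX : MemLp X 4 P) (hY : MemLp Y 4 P) :
    12 * ∫ ω, X ω ^ 2 * Y ω ^ 2 ∂P =
      ∫ ω, (X ω + Y ω) ^ 4 ∂P + ∫ ω, (X ω - Y ω) ^ 4 ∂P
        - 2 * ∫ ω, X ω ^ 4 ∂P - 2 * ∫ ω, Y ω ^ 4 ∂P := by
  have hint {Z : Ω → ℝ} (hZ : MemLp Z 4 P) : Integrable (fun ω => Z ω ^ 4) P :=
    (memLp_two_mul_of_memLp_four hZ hZ).integrable_sq.congr <| .of_forall fun ω => by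
      simp only [Pi.mul_apply]
      ring
  have hadd : Integrable (fun ω => (X ω + Y ω) ^ 4) P := hint (hX.add hY)
  have hsub : Integrable (fun ω => (X ω - Y ω) ^ 4) P := hint (hX.sub hY)
  calc 12 * ∫ ω, X ω ^ 2 * Y ω ^ 2 ∂P
      = ∫ ω, ((X ω + Y ω) ^ 4 + (X ω - Y ω) ^ 4 - 2 * X ω ^ 4 - 2 * Y ω ^ 4) ∂P := by
        rw [← integral_const_mul]
        exact integral_congr_ae (.of_forall fun ω => by ring)
    _ = _ := by
        rw [integral_sub _ ((hint hY).const_mul 2), integral_sub _ ((hint hX).const_mul 2),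
          integral_add hadd hsub, integral_const_mul, integral_const_mul]
        exacts [hadd.add hsub, (hadd.add hsub).sub ((hint hX).const_mul 2)]

end Moments

section FourthCumulant

variable {Ω : Type*} [MeasurableSpace Ω]

/-- The fourth cumulant of a real random variable, expressed through its central moments. -/
noncomputable def fourthCumulant (X : Ω → ℝ) (P : Measure Ω) : ℝ :=
  centralMoment X 4 P - 3 * Var[X; P] ^ 2

variable {P : Measure Ω} {X Y : Ω → ℝ}

lemma fourthCumulant_of_integral_eq_zero (hX : ∫ ω, X ω ∂P = 0) :
    fourthCumulant X P = ∫ ω, X ω ^ 4 ∂P - 3 * Var[X; P] ^ 2 := by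
  simp [fourthCumulant, centralMoment, hX]

lemma fourthCumulant_const_smul (c : ℝ) :
    fourthCumulant (c • X) P = c ^ 4 * fourthCumulant X P := by
  have hmoment : centralMoment (c • X) 4 P = c ^ 4 * centralMoment X 4 P := by
    simp only [centralMoment, Pi.pow_apply, Pi.sub_apply, Pi.smul_apply, smul_eq_mul,
      integral_const_mul, ← mul_sub, mul_pow]
  rw [fourthCumulant, fourthCumulant, hmoment, variance_smul]
  ring

variable [IsProbabilityMeasure P]

lemma centralMoment_four_add_of_indepFun (hXY : IndepFun X Y P) (hX : MemLp X 4 P)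
    (hY : MemLp Y 4 P) :
    centralMoment (X + Y) 4 P =
      centralMoment X 4 P + 6 * (Var[X; P] * Var[Y; P]) + centralMoment Y 4 P := by
  have hXi : Integrable X P := hX.integrable (by norm_num)
  have hYi : Integrable Y P := hY.integrable (by norm_num)
  have hindep : IndepFun (fun ω => X ω - P[X]) (fun ω => Y ω - P[Y]) P :=
    hXY.comp (measurable_id.sub_const _) (measurable_id.sub_const _)
  have hcentered {Z : Ω → ℝ} (hZ : Integrable Z P) : ∫ ω, (Z ω - P[Z]) ∂P = 0 := by
    simp [integral_sub hZ (integrable_const _)]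
  have h := integral_add_pow_four_of_indepFun hindep (hX.sub (memLp_const _))
    (hY.sub (memLp_const _)) (hcentered hXi) (hcentered hYi)
  rw [variance_eq_integral hX.aemeasurable, variance_eq_integral hY.aemeasurable]
  simpa only [centralMoment, integral_add hXi hYi, Pi.pow_apply, Pi.sub_apply, Pi.add_apply,
    add_sub_add_comm] using h

lemma fourthCumulant_add_of_indepFun (hXY : IndepFun X Y P) (hX : MemLp X 4 P)
    (hY : MemLp Y 4 P) :
    fourthCumulant (X + Y) P = fourthCumulant X P + fourthCumulant Y P := by
  have hvar : Var[X + Y; P] = Var[X; P] + Var[Y; P] :=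
    hXY.variance_add (hX.mono_exponent (by norm_num)) (hY.mono_exponent (by norm_num))
  rw [fourthCumulant, fourthCumulant, fourthCumulant, hvar,
    centralMoment_four_add_of_indepFun hXY hX hY]
  ring

lemma fourthCumulant_sum_of_iIndepFun {κ : Type*} {X : κ → Ω → ℝ} (hX : iIndepFun X P)
    (hX4 : ∀ j, MemLp (X j) 4 P) (s : Finset κ) :
    fourthCumulant (∑ j ∈ s, X j) P = ∑ j ∈ s, fourthCumulant (X j) P := by
  classical
  induction s using Finset.induction_on with
  | empty => simp [fourthCumulant]
  | insert j s hj ih =>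
    have hindep : IndepFun (X j) (∑ k ∈ s, X k) P :=
      (hX.indepFun_finsetSum_of_notMem₀ (fun k => (hX4 k).aemeasurable) hj).symm
    rw [sum_insert hj, sum_insert hj, ← ih,
      fourthCumulant_add_of_indepFun hindep (hX4 j) (memLp_finsetSum' s fun k _ => hX4 k)]

lemma variance_mul_polarization (hX : MemLp X 4 P) (hY : MemLp Y 4 P)
    (hX0 : ∫ ω, X ω ∂P = 0) (hY0 : ∫ ω, Y ω ∂P = 0) :
    Var[X * Y; P] = Var[X; P] * Var[Y; P] + cov[X, Y; P] ^ 2 +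
      (fourthCumulant (X + Y) P + fourthCumulant (X - Y) P
        - 2 * fourthCumulant X P - 2 * fourthCumulant Y P) / 12 := by
  have hX2 : MemLp X 2 P := hX.mono_exponent (by norm_num)
  have hY2 : MemLp Y 2 P := hY.mono_exponent (by norm_num)
  have hXi : Integrable X P := hX2.integrable (by norm_num)
  have hYi : Integrable Y P := hY2.integrable (by norm_num)
  have hadd : ∫ ω, (X + Y) ω ∂P = 0 := by simp [integral_add hXi hYi, hX0, hY0]
  have hsub : ∫ ω, (X - Y) ω ∂P = 0 := by simp [integral_sub hXi hYi, hX0, hY0]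
  have hcov : cov[X, Y; P] = P[X * Y] := by simp [covariance_eq_sub hX2 hY2, hX0]
  have hpolar := integral_sq_mul_sq_polarization hX hY
  rw [variance_eq_sub (memLp_two_mul_of_memLp_four hX hY), ← hcov, mul_pow,
    fourthCumulant_of_integral_eq_zero hadd, fourthCumulant_of_integral_eq_zero hsub,
    fourthCumulant_of_integral_eq_zero hX0, fourthCumulant_of_integral_eq_zero hY0,
    variance_add hX2 hY2, variance_sub hX2 hY2]
  simp only [Pi.mul_apply, Pi.pow_apply, Pi.add_apply, Pi.sub_apply]
  linarith

end FourthCumulant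

section LinearForm

variable {Ω κ : Type*} [Fintype κ]

/-- The linear form `∑ⱼ Xⱼ wⱼ` with random coefficients `X`: one coordinate of a random projection
of `w`, before normalization. -/
def linearForm (X : κ → Ω → ℝ) (w : κ → ℝ) (ω : Ω) : ℝ :=
  ∑ j, X j ω * w j

lemma linearForm_eq_sum_smul (X : κ → Ω → ℝ) (w : κ → ℝ) :
    linearForm X w = ∑ j, w j • X j := by
  ext ω
  simp [linearForm, mul_comm]

lemma linearForm_add (X : κ → Ω → ℝ) (u v : κ → ℝ) :
    linearForm X (u + v) = linearForm X u + linearForm X v := by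
  simp only [linearForm_eq_sum_smul, Pi.add_apply, add_smul, sum_add_distrib]

lemma linearForm_sub (X : κ → Ω → ℝ) (u v : κ → ℝ) :
    linearForm X (u - v) = linearForm X u - linearForm X v := by
  simp only [linearForm_eq_sum_smul, Pi.sub_apply, sub_smul, sum_sub_distrib]

variable [MeasurableSpace Ω] {P : Measure Ω} {X : κ → Ω → ℝ}

lemma memLp_linearForm {p : ENNReal} (hX : ∀ j, MemLp (X j) p P) (w : κ → ℝ) :
    MemLp (linearForm X w) p P := by
  rw [linearForm_eq_sum_smul]
  exact memLp_finsetSum' _ fun j _ => (hX j).const_smul (w j)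

lemma integral_linearForm_eq_zero (hX : ∀ j, Integrable (X j) P) (hX0 : ∀ j, ∫ ω, X j ω ∂P = 0)
    (w : κ → ℝ) : ∫ ω, linearForm X w ω ∂P = 0 := by
  simp only [linearForm, integral_finsetSum _ fun j _ => (hX j).mul_const _, integral_mul_const,
    hX0, zero_mul, sum_const_zero]

lemma indepFun_linearForm_mul_linearForm {Y : κ → Ω → ℝ}
    (hXY : IndepFun (fun ω j => X j ω) (fun ω j => Y j ω) P) (u v : κ → ℝ) :
    IndepFun (linearForm X u * linearForm X v) (linearForm Y u * linearForm Y v) P :=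
  have hmeas : Measurable fun z : κ → ℝ => (∑ j, z j * u j) * ∑ j, z j * v j := by fun_prop
  hXY.comp hmeas hmeas

lemma covariance_linearForm [IsFiniteMeasure P]
    (hX : Pairwise fun j k => IndepFun (X j) (X k) P) (hX2 : ∀ j, MemLp (X j) 2 P) (u v : κ → ℝ) :
    cov[linearForm X u, linearForm X v; P] = ∑ j, u j * v j * Var[X j; P] := by
  simp only [linearForm_eq_sum_smul]
  rw [covariance_sum_sum (fun j => (hX2 j).const_smul (u j)) fun j => (hX2 j).const_smul (v j)]
  refine sum_congr rfl fun j _ => ?_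
  rw [sum_eq_single j]
  · rw [covariance_smul_left, covariance_smul_right, covariance_self (hX2 j).aemeasurable,
      mul_assoc]
  · intro k _ hkj
    rw [covariance_smul_left, covariance_smul_right,
      (hX hkj.symm).covariance_eq_zero (hX2 j) (hX2 k), mul_zero, mul_zero]
  · simp

lemma variance_linearForm [IsFiniteMeasure P]
    (hX : Pairwise fun j k => IndepFun (X j) (X k) P) (hX2 : ∀ j, MemLp (X j) 2 P) (w : κ → ℝ) :
    Var[linearForm X w; P] = ∑ j, w j ^ 2 * Var[X j; P] := by
  rw [← covariance_self (memLp_linearForm hX2 w).aemeasurable, covariance_linearForm hX hX2]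
  simp only [sq]

variable [IsProbabilityMeasure P]

lemma fourthCumulant_linearForm (hX : iIndepFun X P) (hX4 : ∀ j, MemLp (X j) 4 P) (w : κ → ℝ) :
    fourthCumulant (linearForm X w) P = ∑ j, w j ^ 4 * fourthCumulant (X j) P := by
  have hsmul : iIndepFun (fun j => w j • X j) P :=
    hX.comp (fun j x => w j * x) fun j => measurable_const_mul (w j)
  simp only [linearForm_eq_sum_smul, fourthCumulant_const_smul,
    fourthCumulant_sum_of_iIndepFun hsmul (fun j => (hX4 j).const_smul (w j))]

lemma variance_linearForm_mul_linearForm (hX : iIndepFun X P) (hX4 : ∀ j, MemLp (X j) 4 P)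
    (hX0 : ∀ j, ∫ ω, X j ω ∂P = 0) (u v : κ → ℝ) :
    Var[linearForm X u * linearForm X v; P] =
      Var[linearForm X u; P] * Var[linearForm X v; P] + cov[linearForm X u, linearForm X v; P] ^ 2
        + ∑ j, u j ^ 2 * v j ^ 2 * fourthCumulant (X j) P := by
  have hmean := integral_linearForm_eq_zero (fun j => (hX4 j).integrable (by norm_num)) hX0
  rw [variance_mul_polarization (memLp_linearForm hX4 u) (memLp_linearForm hX4 v) (hmean u)
    (hmean v), ← linearForm_add, ← linearForm_sub]
  simp only [fourthCumulant_linearForm hX hX4, mul_sum, ← sum_add_distrib, ← sum_sub_distrib,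
    sum_div, Pi.add_apply, Pi.sub_apply]
  congr 1
  exact sum_congr rfl fun j _ => by ring

lemma integral_linearForm_mul_linearForm (hX : Pairwise fun j k => IndepFun (X j) (X k) P)
    (hX2 : ∀ j, MemLp (X j) 2 P) (hX0 : ∀ j, ∫ ω, X j ω ∂P = 0) (u v : κ → ℝ) :
    ∫ ω, linearForm X u ω * linearForm X v ω ∂P = ∑ j, u j * v j * Var[X j; P] := by
  have hmean := integral_linearForm_eq_zero (fun j => (hX2 j).integrable (by norm_num)) hX0 u
  have hcov := covariance_eq_sub (memLp_linearForm hX2 u) (memLp_linearForm hX2 v)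
  rw [hmean, zero_mul, sub_zero, covariance_linearForm hX hX2] at hcov
  exact hcov.symm

lemma variance_linearForm_mul_linearForm_le (hX : iIndepFun X P) (hX4 : ∀ j, MemLp (X j) 4 P)
    (hX0 : ∀ j, ∫ ω, X j ω ∂P = 0) (hX1 : ∀ j, Var[X j; P] = 1) {K : ℝ}
    (hK : ∀ j, ∫ ω, X j ω ^ 4 ∂P ≤ K) {u : κ → ℝ} {μ : ℝ}
    (hpeak : ∀ j, |u j| ≤ μ * √(∑ j, u j ^ 2)) (v : κ → ℝ) :
    Var[linearForm X u * linearForm X v; P] ≤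
      (2 + μ ^ 2 * K) * ((∑ j, u j ^ 2) * ∑ j, v j ^ 2) := by
  have hX2 (j : κ) : MemLp (X j) 2 P := (hX4 j).mono_exponent (by norm_num)
  have hpair : Pairwise fun j k => IndepFun (X j) (X k) P := fun _ _ hjk => hX.indepFun hjk
  have hcumulant (j : κ) : fourthCumulant (X j) P ≤ K := by
    rw [fourthCumulant_of_integral_eq_zero (hX0 j), hX1]
    linarith [hK j]
  have hK0 (j : κ) : 0 ≤ K := (integral_nonneg fun ω => by positivity).trans (hK j)
  have hpeak_sq (j : κ) : u j ^ 2 ≤ μ ^ 2 * ∑ j, u j ^ 2 := by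
    have h := pow_le_pow_left₀ (abs_nonneg _) (hpeak j) 2
    rwa [sq_abs, mul_pow, Real.sq_sqrt (by positivity)] at h
  have hexcess : ∑ j, u j ^ 2 * v j ^ 2 * fourthCumulant (X j) P ≤
      μ ^ 2 * K * ((∑ j, u j ^ 2) * ∑ j, v j ^ 2) := by
    calc ∑ j, u j ^ 2 * v j ^ 2 * fourthCumulant (X j) P
        ≤ ∑ j, u j ^ 2 * v j ^ 2 * K := by
          gcongr with j
          exact hcumulant j
      _ ≤ ∑ j, (μ ^ 2 * ∑ j, u j ^ 2) * v j ^ 2 * K := by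
          gcongr with j
          exacts [hK0 j, hpeak_sq j]
      _ = μ ^ 2 * K * ((∑ j, u j ^ 2) * ∑ j, v j ^ 2) := by
          rw [← sum_mul, ← mul_sum]
          ring
  rw [variance_linearForm_mul_linearForm hX hX4 hX0, variance_linearForm hpair hX2,
    variance_linearForm hpair hX2, covariance_linearForm hpair hX2]
  simp only [hX1, mul_one]
  linarith [sum_mul_sq_le_sq_mul_sq univ u v]

end LinearForm

section Independence

variable {Ω ι κ β : Type*} [MeasurableSpace Ω] [MeasurableSpace β] {P : Measure Ω}
  {Φ : ι × κ → Ω → β}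

lemma iIndepFun_row (hΦ : iIndepFun Φ P) (i : ι) : iIndepFun (fun j => Φ (i, j)) P :=
  hΦ.precomp (Prod.mk_right_injective i)

lemma pairwise_indepFun_rows [Finite κ] (hΦ : iIndepFun Φ P) (hmeas : ∀ p, AEMeasurable (Φ p) P) :
    Pairwise fun i k => IndepFun (fun ω j => Φ (i, j) ω) (fun ω j => Φ (k, j) ω) P := by
  classical
  have := Fintype.ofFinite κ
  intro i k hik
  let row (i : ι) : Finset (ι × κ) := {i} ×ˢ univ
  have hdisj : Disjoint (row i) (row k) :=
    disjoint_product.2 (.inl (disjoint_singleton.2 hik))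
  have hrow (i : ι) (j : κ) : (i, j) ∈ row i := by simp [row]
  exact (hΦ.indepFun_finset₀ (row i) (row k) hdisj hmeas).comp
    (φ := fun z j => z ⟨(i, j), hrow i j⟩) (ψ := fun z j => z ⟨(k, j), hrow k j⟩)
    (by fun_prop) (by fun_prop)

end Independence

lemma sum_sq_pos_of_ne_zero {κ : Type*} [Fintype κ] {w : κ → ℝ} (hw : w ≠ 0) :
    0 < ∑ j, w j ^ 2 := by
  obtain ⟨j, hj⟩ := Function.ne_iff.1 hw
  exact sum_pos' (fun _ _ => sq_nonneg _) ⟨j, mem_univ j, sq_pos_of_ne_zero hj⟩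

lemma meas_ge_abs_average_sub_le {Ω ι : Type*} [MeasurableSpace Ω] {P : Measure Ω}
    [IsFiniteMeasure P] [Fintype ι] [Nonempty ι] {W : ι → Ω → ℝ} (hW2 : ∀ i, MemLp (W i) 2 P)
    (hindep : Pairwise fun i k => IndepFun (W i) (W k) P) {c V : ℝ} (hmean : ∀ i, P[W i] = c)
    (hvar : ∀ i, Var[W i; P] ≤ V) {t : ℝ} (ht : 0 < t) :
    P {ω | t ≤ |1 / (Fintype.card ι : ℝ) * ∑ i, W i ω - c|} ≤
      ENNReal.ofReal (V / (t ^ 2 * Fintype.card ι)) := by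
  set n : ℝ := (Fintype.card ι : ℝ) with hn
  have hn0 : 0 < n := by positivity
  let Z : Ω → ℝ := fun ω => 1 / n * (∑ i, W i) ω
  have hZ2 : MemLp Z 2 P := (memLp_finsetSum' univ fun i _ => hW2 i).const_mul _
  have hZmean : P[Z] = c := by
    simp only [Z, integral_const_mul, Finset.sum_apply]
    rw [integral_finsetSum _ fun i _ => (hW2 i).integrable (by norm_num)]
    simp only [hmean, sum_const, card_univ, nsmul_eq_mul, ← hn]
    field_simp
  have hZvar : Var[Z; P] ≤ V / n := by
    have hsum : ∑ i, Var[W i; P] ≤ n * V := by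
      simpa [hn] using sum_le_card_nsmul univ _ V fun i _ => hvar i
    calc Var[Z; P] = (1 / n) ^ 2 * ∑ i, Var[W i; P] := by
          rw [variance_const_mul, IndepFun.variance_sum (fun i _ => hW2 i) (hindep.set_pairwise _)]
      _ ≤ (1 / n) ^ 2 * (n * V) := by gcongr
      _ = V / n := by field_simp
  calc P {ω | t ≤ |1 / n * ∑ i, W i ω - c|}
      = P {ω | t ≤ |Z ω - P[Z]|} := by rw [hZmean]; simp only [Z, Finset.sum_apply]
    _ ≤ ENNReal.ofReal (Var[Z; P] / t ^ 2) := meas_ge_le_variance_div_sq hZ2 ht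
    _ ≤ ENNReal.ofReal (V / n / t ^ 2) := by gcongr
    _ = ENNReal.ofReal (V / (t ^ 2 * n)) := by rw [div_div, mul_comm n]

section RandomProjection

variable {Ω ι κ : Type*} [Fintype ι] [Fintype κ]

/-- The random projection `(1/√ℓ) Φ w` of `w`, where `ℓ` is the number of rows of the random
matrix `Φ`. -/
noncomputable def randomProjection (Φ : ι → κ → Ω → ℝ) (w : κ → ℝ) (ω : Ω) (i : ι) : ℝ :=
  1 / √(Fintype.card ι) * linearForm (Φ i) w ω

lemma sum_randomProjection_mul_randomProjection (Φ : ι → κ → Ω → ℝ) (u v : κ → ℝ) (ω : Ω) :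
    ∑ i, randomProjection Φ u ω i * randomProjection Φ v ω i =
      1 / (Fintype.card ι : ℝ) * ∑ i, (linearForm (Φ i) u * linearForm (Φ i) v) ω := by
  rw [mul_sum]
  refine sum_congr rfl fun i _ => ?_
  rw [randomProjection, randomProjection, Pi.mul_apply, mul_mul_mul_comm, div_mul_div_comm,
    Real.mul_self_sqrt (by positivity), one_mul]

theorem sparse_projection_chebyshev_bound_general [Nonempty ι] [MeasurableSpace Ω] {P : Measure Ω}
    [IsProbabilityMeasure P] {Φ : ι → κ → Ω → ℝ}
    (hrows : Pairwise fun i k => IndepFun (fun ω j => Φ i j ω) (fun ω j => Φ k j ω) P)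
    (hentries : ∀ i, iIndepFun (Φ i) P) (hL4 : ∀ i j, MemLp (Φ i j) 4 P)
    (hmean : ∀ i j, ∫ ω, Φ i j ω ∂P = 0) (hsq : ∀ i j, ∫ ω, Φ i j ω ^ 2 ∂P = 1) {K : ℝ}
    (hfour : ∀ i j, ∫ ω, Φ i j ω ^ 4 ∂P ≤ K) {u v : κ → ℝ} (hu : u ≠ 0) (hv : v ≠ 0) {μ : ℝ}
    (hpeak : ∀ j, |u j| ≤ μ * √(∑ j, u j ^ 2)) {ε : ℝ} (hε : 0 < ε) :
    P {ω | ε * √(∑ j, u j ^ 2) * √(∑ j, v j ^ 2) ≤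
        |∑ i, randomProjection Φ u ω i * randomProjection Φ v ω i - ∑ j, u j * v j|} ≤
      ENNReal.ofReal ((2 + μ ^ 2 * K) / (ε ^ 2 * Fintype.card ι)) := by
  have hu0 := sum_sq_pos_of_ne_zero hu
  have hv0 := sum_sq_pos_of_ne_zero hv
  have hL2 (i : ι) (j : κ) : MemLp (Φ i j) 2 P := (hL4 i j).mono_exponent (by norm_num)
  have hvar (i : ι) (j : κ) : Var[Φ i j; P] = 1 := by
    rw [variance_of_integral_eq_zero (hL4 i j).aemeasurable (hmean i j), hsq]
  have hprod (i : ι) : P[linearForm (Φ i) u * linearForm (Φ i) v] = ∑ j, u j * v j := by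
    simpa [hvar] using integral_linearForm_mul_linearForm
      (fun _ _ hjk => (hentries i).indepFun hjk) (hL2 i) (hmean i) u v
  have hbound := meas_ge_abs_average_sub_le
    (fun i => memLp_two_mul_of_memLp_four (memLp_linearForm (hL4 i) u) (memLp_linearForm (hL4 i) v))
    (fun _ _ hik => indepFun_linearForm_mul_linearForm (hrows hik) u v) hprod
    (fun i => variance_linearForm_mul_linearForm_le (hentries i) (hL4 i) (hmean i) (hvar i)
      (hfour i) hpeak v)
    (show 0 < ε * √(∑ j, u j ^ 2) * √(∑ j, v j ^ 2) by positivity)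
  simp only [sum_randomProjection_mul_randomProjection]
  convert hbound using 2
  rw [mul_pow, mul_pow, Real.sq_sqrt hu0.le, Real.sq_sqrt hv0.le]
  field_simp

end RandomProjection

/-- Chebyshev step in the proof of Lemma 1: for the sparse random projections
`x = (1/√ℓ)Φu`, `y = (1/√ℓ)Φv`, and any `ε > 0`,
`P(|⟨x,y⟩ − ⟨u,v⟩| ≥ ε‖u‖₂‖v‖₂) ≤ (2 + μ² max_j (1/g_j)) / (ε² ℓ)`. -/
theorem sparse_projection_chebyshev_bound
    {Ω : Type*} [MeasurableSpace Ω] (P : Measure Ω) [IsProbabilityMeasure P]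
    (L N : ℕ) (hL : 0 < L) (hN : 0 < N) (g : Fin N → ℝ)
    (hg0 : ∀ j, 0 < g j) (hg1 : ∀ j, g j ≤ 1)
    (Φ : Fin L × Fin N → Ω → ℝ)
    (hmeas : ∀ p, Measurable (Φ p))
    (hindep : iIndepFun Φ P)
    (hL4 : ∀ p, MemLp (Φ p) 4 P)
    (hmean : ∀ i j, ∫ ω, Φ (i, j) ω ∂P = 0)
    (hsq : ∀ i j, ∫ ω, (Φ (i, j) ω) ^ 2 ∂P = 1)
    (hfour : ∀ i j, ∫ ω, (Φ (i, j) ω) ^ 4 ∂P = 1 / g j)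
    (u v : Fin N → ℝ) (hu : u ≠ 0) (hv : v ≠ 0)
    (μ : ℝ) (hμ : 0 ≤ μ)
    (hpeak : ∀ j, |u j| ≤ μ * Real.sqrt (∑ j, (u j) ^ 2))
    (x y : Ω → Fin L → ℝ)
    (hx : ∀ ω i, x ω i = (1 / Real.sqrt L) * ∑ j, Φ (i, j) ω * u j)
    (hy : ∀ ω i, y ω i = (1 / Real.sqrt L) * ∑ j, Φ (i, j) ω * v j)
    (ε : ℝ) (hε : 0 < ε) :
    P {ω | ε * Real.sqrt (∑ j, (u j) ^ 2) * Real.sqrt (∑ j, (v j) ^ 2) ≤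
        |(∑ i, x ω i * y ω i) - ∑ j, u j * v j|} ≤
      ENNReal.ofReal
        ((2 + μ ^ 2 * Finset.univ.sup' (Finset.univ_nonempty_iff.mpr ⟨⟨0, hN⟩⟩)
            (fun j => 1 / g j)) / (ε ^ 2 * L)) := by
  have : Nonempty (Fin L) := ⟨⟨0, hL⟩⟩
  obtain rfl : x = randomProjection (fun i j => Φ (i, j)) u := by
    ext ω i
    simp [randomProjection, linearForm, hx]
  obtain rfl : y = randomProjection (fun i j => Φ (i, j)) v := by
    ext ω i
    simp [randomProjection, linearForm, hy]
  simpa only [Fintype.card_fin] using sparse_projection_chebyshev_bound_general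
    (pairwise_indepFun_rows hindep fun p => (hmeas p).aemeasurable) (iIndepFun_row hindep)
    (fun i j => hL4 (i, j)) hmean hsq
    (fun i j => (hfour i j).trans_le (le_sup' (fun j => 1 / g j) (mem_univ j))) hu hv hpeak hε
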